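/- ∫₀¹ 1/(k^{1/2}(1-k²)^{3/4} K(k)) dk = 2 log(1+√2). -/

import Mathlib

open scoped Real
open MeasureTheory

noncomputable def EllK (k : ℝ) : ℝ :=
  ∫ x in (0:ℝ)..(1:ℝ), 1 / Real.sqrt ((1 - x^2) * (1 - k^2 * x^2))

noncomputable def EllE (k : ℝ) : ℝ :=
  ∫ x in (0:ℝ)..(1:ℝ), Real.sqrt ((1 - k^2 * x^2) / (1 - x^2))

noncomputable def EllK' (k : ℝ) : ℝ := EllK (Real.sqrt (1 - k^2))

/-!
The modulus is parametrised as `k = θ₂² / θ₃²` by the theta constants of nome `exp (-π t)`,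
`0 < t`. The doubling `t ↦ 2 t` acts on `(θ₃², θ₄²)` as one arithmetic-geometric mean step, so
Landen's transformation makes `gaussIntegral (θ₃²) (θ₄²)` invariant under doubling, hence equal to
its limit `π / 2` at infinity; this says `EllK k = (π / 2) θ₃²`. Likewise `k' / (k θ₄⁴)` is
invariant under doubling, hence equal to its limit `-π / 2`. With `1 - k² = (θ₄ / θ₃)⁴` the integral
becomes `∫ θ₂ θ₄ dt` over `(0, ∞)`.

Replacing `θ₄ t` by `θ₂ (1 / t) / √t` and expanding both factors, each term is integrated by the
Cauchy–Schlömilch substitution. Summed along one index, the resulting double series has the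
logarithms `log ((1 + q ^ (2 n + 1)) / (1 - q ^ (2 n + 1)))`, `q = exp (-π / 2)`, as its terms, so
by the Jacobi triple product its sum is `2 log (θ₃ (1 / 2) / θ₄ (1 / 2))`. Finally
`θ₃ (1 / 2) = (1 + √2) θ₄ (1 / 2)`, because `1 / 2` and `2` are exchanged by `t ↦ 1 / t`.
-/

section CauchySchlomilch

open Set Filter

variable {E : Type*} [NormedAddCommGroup E] [NormedSpace ℝ E] {c : ℝ}

lemma hasDerivAt_sub_div (c : ℝ) {x : ℝ} (hx : x ≠ 0) :
    HasDerivAt (fun x ↦ x - c / x) (1 + c / x ^ 2) x := by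
  simpa only [div_eq_mul_inv, mul_neg, sub_neg_eq_add] using!
    (hasDerivAt_id' x).sub ((hasDerivAt_inv hx).const_mul c)

lemma monotoneOn_sub_div (hc : 0 ≤ c) : MonotoneOn (fun x ↦ x - c / x) (Ioi 0) :=
  fun _ hx _ _ hxy ↦ sub_le_sub hxy (div_le_div_of_nonneg_left hc hx hxy)

lemma image_sub_div_Ioi (hc : 0 < c) : (fun x ↦ x - c / x) '' Ioi 0 = univ := by
  refine eq_univ_of_forall fun u ↦ ?_
  have hr : √(u ^ 2 + 4 * c) ^ 2 = u ^ 2 + 4 * c := Real.sq_sqrt (by positivity)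
  have hpos : 0 < u + √(u ^ 2 + 4 * c) := by
    linarith [neg_abs_le u, Real.lt_sqrt_of_sq_lt (show |u| ^ 2 < u ^ 2 + 4 * c by
      rw [sq_abs]; linarith)]
  refine ⟨(u + √(u ^ 2 + 4 * c)) / 2, half_pos hpos, ?_⟩
  field_simp
  linarith

lemma integral_one_add_div_sq_smul_comp_sub_div (hc : 0 < c) (f : ℝ → E) :
    ∫ x in Ioi 0, (1 + c / x ^ 2) • f (x - c / x) = ∫ x, f x := by
  rw [← integral_image_eq_integral_deriv_smul_of_monotoneOn measurableSet_Ioi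
    (fun x hx ↦ (hasDerivAt_sub_div c (ne_of_gt hx)).hasDerivWithinAt)
    (monotoneOn_sub_div hc.le) f, image_sub_div_Ioi hc, setIntegral_univ]

lemma integrableOn_one_add_div_sq_smul_comp_sub_div (hc : 0 < c) {f : ℝ → E}
    (hf : Integrable f) :
    IntegrableOn (fun x ↦ (1 + c / x ^ 2) • f (x - c / x)) (Ioi 0) := by
  rw [← integrableOn_image_iff_integrableOn_deriv_smul_of_monotoneOn measurableSet_Ioi
    (fun x hx ↦ (hasDerivAt_sub_div c (ne_of_gt hx)).hasDerivWithinAt)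
    (monotoneOn_sub_div hc.le) f, image_sub_div_Ioi hc]
  exact hf.integrableOn

lemma integrableOn_comp_sub_div (hc : 0 < c) {f : ℝ → E} (hf : Integrable f) :
    IntegrableOn (fun x ↦ f (x - c / x)) (Ioi 0) := by
  have hw (x : ℝ) : 0 < 1 + c / x ^ 2 := by positivity
  have hmeas : Measurable fun x : ℝ ↦ (1 + c / x ^ 2)⁻¹ := by fun_prop
  refine ((integrableOn_one_add_div_sq_smul_comp_sub_div hc hf).bdd_smul
    (φ := fun x ↦ (1 + c / x ^ 2)⁻¹) 1 hmeas.aestronglyMeasurable (ae_of_all _ fun x ↦ ?_)).congr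
    (ae_of_all _ fun x ↦ inv_smul_smul₀ (hw x).ne' _)
  rw [norm_inv, Real.norm_of_nonneg (hw x).le]
  exact inv_le_one_of_one_le₀ (le_add_of_nonneg_right (by positivity))

lemma image_div_Ioi (hc : 0 < c) : (fun x ↦ c / x) '' Ioi 0 = Ioi 0 := by
  refine Subset.antisymm (image_subset_iff.2 fun x hx ↦ div_pos hc hx) fun y hy ↦ ?_
  exact ⟨c / y, div_pos hc hy, div_div_cancel₀ hc.ne'⟩

lemma integral_div_sq_smul_comp_div (hc : 0 < c) (f : ℝ → E) :
    ∫ x in Ioi 0, (c / x ^ 2) • f (c / x) = ∫ x in Ioi 0, f x := by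
  have hderiv : ∀ x ∈ Ioi (0 : ℝ), HasDerivWithinAt (fun x ↦ c / x) (-(c / x ^ 2)) (Ioi 0) x :=
    fun x hx ↦ by
      simpa only [div_eq_mul_inv, mul_neg, neg_mul] using
        ((hasDerivAt_inv (ne_of_gt hx)).const_mul c).hasDerivWithinAt
  have hanti : AntitoneOn (fun x ↦ c / x) (Ioi 0) :=
    fun _ hx _ _ hxy ↦ div_le_div_of_nonneg_left hc.le hx hxy
  simpa only [image_div_Ioi hc, neg_neg] using
    (integral_image_eq_integral_deriv_smul_of_antitoneOn measurableSet_Ioi hderiv hanti f).symm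

lemma integral_eq_two_smul_integral_Ioi_of_even {f : ℝ → E} (hf : f.Even) (hfi : Integrable f) :
    ∫ x, f x = (2 : ℝ) • ∫ x in Ioi 0, f x := by
  have hneg : ∫ x in Iic 0, f x = ∫ x in Ioi 0, f x := by
    simpa only [neg_zero, hf _] using (integral_comp_neg_Ioi 0 f).symm
  rw [← integral_add_compl measurableSet_Iic hfi, compl_Iic, hneg, two_smul]

theorem integral_comp_sub_div_of_even (hc : 0 < c) {f : ℝ → E} (hf : f.Even)
    (hfi : Integrable f) :
    ∫ x in Ioi 0, f (x - c / x) = ∫ x in Ioi 0, f x := by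
  have hswap : ∫ x in Ioi 0, (c / x ^ 2) • f (x - c / x) = ∫ x in Ioi 0, f (x - c / x) := by
    rw [← integral_div_sq_smul_comp_div hc]
    refine setIntegral_congr_fun measurableSet_Ioi fun x hx ↦ ?_
    have hx0 : x ≠ 0 := ne_of_gt hx
    have hweight : c / x ^ 2 * (c / (c / x) ^ 2) = 1 := by field_simp
    simp only [div_div_cancel₀ hc.ne', ← hf (x - c / x), neg_sub, smul_smul, hweight, one_smul]
  have hint := integrableOn_comp_sub_div hc hfi
  have hint' : IntegrableOn (fun x ↦ (c / x ^ 2) • f (x - c / x)) (Ioi 0) := by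
    simpa only [Pi.sub_def, add_smul, one_smul, add_sub_cancel_left] using
      (integrableOn_one_add_div_sq_smul_comp_sub_div hc hfi).sub hint
  have hsum := integral_one_add_div_sq_smul_comp_sub_div hc f
  simp only [add_smul, one_smul] at hsum
  rw [integral_add hint hint', hswap, ← two_smul ℝ,
    integral_eq_two_smul_integral_Ioi_of_even hf hfi] at hsum
  exact smul_right_injective E two_ne_zero hsum

end CauchySchlomilch

section GaussIntegral

open Set Filter

variable {a b : ℝ}

/-- Gauss's symmetric form of the complete elliptic integral of the first kind. -/
noncomputable def gaussIntegral (a b : ℝ) : ℝ :=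
  ∫ x in Ioi 0, (√(x ^ 2 + a ^ 2) * √(x ^ 2 + b ^ 2))⁻¹

lemma sqrt_sq_add_sq_pos (ha : 0 < a) (x : ℝ) : 0 < √(x ^ 2 + a ^ 2) :=
  Real.sqrt_pos.2 (by positivity)

theorem gaussIntegral_landen (ha : 0 < a) (hb : 0 < b) :
    gaussIntegral ((a + b) / 2) √(a * b) = gaussIntegral a b := by
  have hab : 0 < a * b := mul_pos ha hb
  let h : ℝ → ℝ := fun u ↦ (√(u ^ 2 + ((a + b) / 2) ^ 2) * √(u ^ 2 + √(a * b) ^ 2))⁻¹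
  have hleft : ∫ u, h (u / 2) = 4 * gaussIntegral ((a + b) / 2) √(a * b) := by
    have habs : ∫ u, h u = 2 * gaussIntegral ((a + b) / 2) √(a * b) := by
      rw [gaussIntegral, ← integral_comp_abs]
      simp only [sq_abs, h]
    rw [Measure.integral_comp_div, habs, abs_two, smul_eq_mul]
    ring
  have hright : ∫ x in Ioi 0, (1 + a * b / x ^ 2) • h ((x - a * b / x) / 2) =
      4 * gaussIntegral a b := by
    rw [gaussIntegral, ← integral_const_mul]
    refine setIntegral_congr_fun measurableSet_Ioi fun x (hx : 0 < x) ↦ ?_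
    have hmean : ((x - a * b / x) / 2) ^ 2 + ((a + b) / 2) ^ 2 =
        (x ^ 2 + a ^ 2) * (x ^ 2 + b ^ 2) / (2 * x) ^ 2 := by field_simp; ring
    have hgeom : ((x - a * b / x) / 2) ^ 2 + √(a * b) ^ 2 =
        ((x ^ 2 + a * b) / (2 * x)) ^ 2 := by
      rw [Real.sq_sqrt hab.le]; field_simp; ring
    simp only [h, smul_eq_mul]
    rw [hmean, hgeom, Real.sqrt_sq (by positivity), Real.sqrt_div' _ (by positivity),
      Real.sqrt_sq (by positivity), Real.sqrt_mul (by positivity)]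
    have := sqrt_sq_add_sq_pos ha x
    have := sqrt_sq_add_sq_pos hb x
    field_simp
    norm_num
  linarith [integral_one_add_div_sq_smul_comp_sub_div hab fun u ↦ h (u / 2)]

lemma inv_sq_add_sq_eq (ha : a ≠ 0) (x : ℝ) :
    (x ^ 2 + a ^ 2)⁻¹ = (a ^ 2)⁻¹ * (1 + (a⁻¹ * x) ^ 2)⁻¹ := by
  rw [← mul_inv]
  congr 1
  field_simp
  ring

lemma integrable_inv_sq_add_sq (ha : a ≠ 0) : Integrable fun x : ℝ ↦ (x ^ 2 + a ^ 2)⁻¹ := by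
  simp_rw [inv_sq_add_sq_eq ha]
  exact (integrable_inv_one_add_sq.comp_mul_left' (inv_ne_zero ha)).const_mul _

lemma gaussIntegral_self (ha : 0 < a) : gaussIntegral a a = π / 2 / a := by
  have hsq (x : ℝ) : √(x ^ 2 + a ^ 2) * √(x ^ 2 + a ^ 2) = x ^ 2 + a ^ 2 :=
    Real.mul_self_sqrt (by positivity)
  simp_rw [gaussIntegral, hsq, inv_sq_add_sq_eq ha.ne']
  rw [integral_const_mul, integral_comp_mul_left_Ioi (fun x : ℝ ↦ (1 + x ^ 2)⁻¹) 0 (inv_pos.2 ha),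
    mul_zero, integral_Ioi_inv_one_add_sq]
  simp only [smul_eq_mul, inv_inv, Real.arctan_zero, sub_zero]
  field_simp

lemma integrable_inv_sqrt_mul_sqrt (ha : 0 < a) (hb : 0 < b) :
    Integrable fun x : ℝ ↦ (√(x ^ 2 + a ^ 2) * √(x ^ 2 + b ^ 2))⁻¹ := by
  refine ((integrable_inv_sq_add_sq ha.ne').add (integrable_inv_sq_add_sq hb.ne')).mono'
    (Measurable.aestronglyMeasurable (by fun_prop)) (ae_of_all _ fun x ↦ ?_)
  rw [Real.norm_of_nonneg (by positivity), mul_inv, Pi.add_apply,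
    ← Real.sq_sqrt (show 0 ≤ x ^ 2 + a ^ 2 by positivity),
    ← Real.sq_sqrt (show 0 ≤ x ^ 2 + b ^ 2 by positivity), ← inv_pow, ← inv_pow,
    Real.sqrt_sq (by positivity), Real.sqrt_sq (by positivity)]
  nlinarith [sq_nonneg (√(x ^ 2 + a ^ 2)⁻¹ - √(x ^ 2 + b ^ 2)⁻¹)]

lemma gaussIntegral_anti {a' b' : ℝ} (ha : 0 < a) (hb : 0 < b) (haa' : a ≤ a') (hbb' : b ≤ b') :
    gaussIntegral a' b' ≤ gaussIntegral a b := by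
  refine setIntegral_mono
    (integrable_inv_sqrt_mul_sqrt (ha.trans_le haa') (hb.trans_le hbb')).integrableOn
    (integrable_inv_sqrt_mul_sqrt ha hb).integrableOn fun x ↦ ?_
  have := sqrt_sq_add_sq_pos ha x
  have := sqrt_sq_add_sq_pos hb x
  dsimp only
  gcongr

lemma hasDerivAt_div_sqrt_sq_add_sq (hb : 0 < b) (y : ℝ) :
    HasDerivAt (fun y ↦ y / √(y ^ 2 + b ^ 2)) (b ^ 2 / √(y ^ 2 + b ^ 2) ^ 3) y := by
  have hpos : 0 < y ^ 2 + b ^ 2 := by positivity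
  have hsqrt := ((hasDerivAt_pow 2 y).add_const (b ^ 2)).sqrt hpos.ne'
  refine ((hasDerivAt_id' y).div hsqrt (Real.sqrt_pos.2 hpos).ne').congr_deriv ?_
  have := Real.sqrt_pos.2 hpos
  field_simp
  rw [Real.sq_sqrt hpos.le]
  push_cast
  ring

lemma strictMono_div_sqrt_sq_add_sq (hb : 0 < b) : StrictMono fun y ↦ y / √(y ^ 2 + b ^ 2) :=
  strictMono_of_hasDerivAt_pos (hasDerivAt_div_sqrt_sq_add_sq hb) fun y ↦ by
    have := sqrt_sq_add_sq_pos hb y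
    positivity

lemma image_div_sqrt_sq_add_sq (hb : 0 < b) :
    (fun y ↦ y / √(y ^ 2 + b ^ 2)) '' Ioi 0 = Ioo 0 1 := by
  refine Subset.antisymm ?_ fun x ⟨hx0, hx1⟩ ↦ ?_
  · rintro _ ⟨y, hy : 0 < y, rfl⟩
    have hs := sqrt_sq_add_sq_pos hb y
    exact ⟨div_pos hy hs, (div_lt_one hs).2 (Real.lt_sqrt_of_sq_lt (by nlinarith))⟩
  · have hx2 : 0 < 1 - x ^ 2 := by nlinarith
    have hs : 0 < √(1 - x ^ 2) := Real.sqrt_pos.2 hx2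
    refine ⟨b * x / √(1 - x ^ 2), div_pos (mul_pos hb hx0) hs, ?_⟩
    have hsq : (b * x / √(1 - x ^ 2)) ^ 2 + b ^ 2 = (b / √(1 - x ^ 2)) ^ 2 := by
      rw [div_pow, div_pow, Real.sq_sqrt hx2.le]
      field_simp
      ring
    simp only [hsq, Real.sqrt_sq (div_pos hb hs).le]
    field_simp

lemma ellK_eq_mul_gaussIntegral (ha : 0 < a) (hb : 0 < b) {k : ℝ}
    (hk : 1 - k ^ 2 = (b / a) ^ 2) : EllK k = a * gaussIntegral a b := by
  rw [EllK, intervalIntegral.integral_of_le zero_le_one, integral_Ioc_eq_integral_Ioo,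
    ← image_div_sqrt_sq_add_sq hb, integral_image_eq_integral_deriv_smul_of_monotoneOn
      measurableSet_Ioi (fun y _ ↦ (hasDerivAt_div_sqrt_sq_add_sq hb y).hasDerivWithinAt)
      ((strictMono_div_sqrt_sq_add_sq hb).monotone.monotoneOn _),
    gaussIntegral, ← integral_const_mul]
  refine setIntegral_congr_fun measurableSet_Ioi fun y _ ↦ ?_
  have hpos : 0 < y ^ 2 + b ^ 2 := by positivity
  have := sqrt_sq_add_sq_pos ha y
  have := sqrt_sq_add_sq_pos hb y
  have hradicand :
      (1 - (y / √(y ^ 2 + b ^ 2)) ^ 2) * (1 - k ^ 2 * (y / √(y ^ 2 + b ^ 2)) ^ 2) =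
        (b ^ 2 / (a * √(y ^ 2 + b ^ 2) ^ 2)) ^ 2 * (y ^ 2 + a ^ 2) := by
    rw [show k ^ 2 = 1 - (b / a) ^ 2 by linarith, div_pow y, Real.sq_sqrt hpos.le]
    field_simp
    ring
  simp only [smul_eq_mul]
  rw [hradicand, Real.sqrt_mul (by positivity), Real.sqrt_sq (by positivity)]
  field_simp

end GaussIntegral

section GaussianBessel

open Set Filter

variable {a b : ℝ}

lemma integrable_exp_neg_pi_mul_sq (ha : 0 < a) :
    Integrable fun u : ℝ ↦ Real.exp (-π * a ^ 2 * u ^ 2) := by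
  simpa only [neg_mul] using integrable_exp_neg_mul_sq (b := π * a ^ 2) (by positivity)

lemma exp_neg_mul_sq_mul_inv_sqrt_mul_exp_neg_div (ha : 0 < a) {x : ℝ} (hx : 0 < x) :
    x * (Real.exp (-π * a ^ 2 * x ^ 2) * (1 / √(x ^ 2) * Real.exp (-π * b ^ 2 * (1 / x ^ 2)))) =
      Real.exp (-(2 * π * a * b)) * Real.exp (-π * a ^ 2 * (x - b / a / x) ^ 2) := by
  rw [Real.sqrt_sq hx.le, mul_left_comm, ← mul_assoc x, mul_one_div_cancel hx.ne', one_mul,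
    ← Real.exp_add, ← Real.exp_add]
  congr 1
  field_simp
  ring

lemma integrableOn_exp_mul_inv_sqrt_mul_exp_inv (ha : 0 < a) (hb : 0 < b) :
    IntegrableOn (fun t ↦ Real.exp (-π * a ^ 2 * t) *
      (1 / √t * Real.exp (-π * b ^ 2 * (1 / t)))) (Ioi 0) := by
  rw [← integrableOn_Ioi_comp_rpow_iff' _ (two_ne_zero (α := ℝ))]
  refine IntegrableOn.congr_fun ((integrableOn_comp_sub_div (div_pos hb ha)
    (integrable_exp_neg_pi_mul_sq ha)).const_mul (Real.exp (-(2 * π * a * b))))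
    (fun x hx ↦ ?_) measurableSet_Ioi
  rw [smul_eq_mul, Real.rpow_two, show (2 - 1 : ℝ) = 1 by norm_num, Real.rpow_one,
    exp_neg_mul_sq_mul_inv_sqrt_mul_exp_neg_div ha hx]

theorem integral_exp_mul_inv_sqrt_mul_exp_inv (ha : 0 < a) (hb : 0 < b) :
    ∫ t in Ioi 0, Real.exp (-π * a ^ 2 * t) * (1 / √t * Real.exp (-π * b ^ 2 * (1 / t))) =
      Real.exp (-(2 * π * a * b)) / a := by
  have hgauss : ∫ u in Ioi 0, Real.exp (-π * a ^ 2 * u ^ 2) = 1 / (2 * a) := by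
    rw [neg_mul, integral_gaussian_Ioi, show π / (π * a ^ 2) = (1 / a) ^ 2 by field_simp,
      Real.sqrt_sq (by positivity)]
    field_simp
  have heven : Function.Even fun u : ℝ ↦ Real.exp (-π * a ^ 2 * u ^ 2) :=
    fun u ↦ by simp only [neg_sq]
  rw [← integral_comp_rpow_Ioi_of_pos two_pos, setIntegral_congr_fun (g := fun x ↦
      2 * Real.exp (-(2 * π * a * b)) * Real.exp (-π * a ^ 2 * (x - b / a / x) ^ 2))
      measurableSet_Ioi fun x hx ↦ ?_, integral_const_mul,
    integral_comp_sub_div_of_even (div_pos hb ha) heven (integrable_exp_neg_pi_mul_sq ha), hgauss]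
  · field_simp
  · simp only [smul_eq_mul, Real.rpow_two, show (2 - 1 : ℝ) = 1 by norm_num, Real.rpow_one]
    rw [mul_assoc (2 : ℝ) x, exp_neg_mul_sq_mul_inv_sqrt_mul_exp_neg_div ha hx, ← mul_assoc]

end GaussianBessel

section JacobiTripleProduct

open Filter Topology

/-- The `q`-Pochhammer symbol `(p; p)_N`. -/
def qPochhammer {R : Type*} [CommRing R] (p : R) (N : ℕ) : R :=
  ∏ i ∈ Finset.range N, (1 - p ^ (i + 1))

lemma qPochhammer_succ {R : Type*} [CommRing R] (p : R) (N : ℕ) :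
    qPochhammer p (N + 1) = qPochhammer p N * (1 - p ^ (N + 1)) :=
  Finset.prod_range_succ _ N

section Field

variable {𝕜 : Type*} [Field 𝕜] {p q z : 𝕜}

lemma qPochhammer_ne_zero (hp : ∀ n : ℕ, p ^ (n + 1) ≠ 1) (N : ℕ) : qPochhammer p N ≠ 0 :=
  Finset.prod_ne_zero_iff.2 fun n _ ↦ sub_ne_zero.2 (hp n).symm

/-- The reciprocal of `(p; p)_m` for all integers `m`. Like the reciprocal of `Γ`, it vanishes for
negative `m`, so that sums of `q`-binomial type can run over all of `ℤ`. -/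
def invQPochhammer (p : 𝕜) : ℤ → 𝕜
  | (N : ℕ) => (qPochhammer p N)⁻¹
  | Int.negSucc _ => 0

lemma invQPochhammer_natCast (p : 𝕜) (N : ℕ) : invQPochhammer p N = (qPochhammer p N)⁻¹ := rfl

lemma invQPochhammer_of_neg (p : 𝕜) {m : ℤ} (hm : m < 0) : invQPochhammer p m = 0 := by
  obtain ⟨n, rfl⟩ := Int.eq_negSucc_of_lt_zero hm
  rfl

lemma invQPochhammer_sub_one (hp : ∀ n : ℕ, p ^ (n + 1) ≠ 1) (m : ℤ) :
    invQPochhammer p (m - 1) = (1 - p ^ m) * invQPochhammer p m := by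
  rcases lt_trichotomy m 0 with hm | rfl | hm
  · rw [invQPochhammer_of_neg p hm, invQPochhammer_of_neg p (by lia), mul_zero]
  · rw [invQPochhammer_of_neg p (by lia), zpow_zero, sub_self, zero_mul]
  · obtain ⟨n, rfl⟩ := Int.eq_succ_of_zero_lt hm
    rw [← Nat.cast_succ, Nat.cast_succ, add_sub_cancel_right, ← Nat.cast_succ,
      invQPochhammer_natCast, invQPochhammer_natCast, zpow_natCast, qPochhammer_succ, mul_inv_rev,
      mul_inv_cancel_left₀ (sub_ne_zero.2 (hp n).symm)]

/-- The summand of the finite form of the Jacobi triple product, in which `(1 + z q ^ (2 j + 1))` is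
taken `M` times and `(1 + z⁻¹ q ^ (2 j + 1))` is taken `N` times. -/
def jacobiTerm (q z : 𝕜) (M N n : ℤ) : 𝕜 :=
  z ^ n * q ^ n ^ 2 * (invQPochhammer (q ^ 2) (M - n) * invQPochhammer (q ^ 2) (N + n))

lemma jacobiTerm_inv_neg (q z : 𝕜) (M N n : ℤ) :
    jacobiTerm q z⁻¹ N M (-n) = jacobiTerm q z M N n := by
  simp only [jacobiTerm, inv_zpow', neg_neg, neg_sq, sub_neg_eq_add, ← sub_eq_add_neg,
    mul_comm (invQPochhammer _ (N + n))]

lemma jacobiTerm_succ (hq : q ≠ 0) (hq' : ∀ n : ℕ, (q ^ 2) ^ (n + 1) ≠ 1) (hz : z ≠ 0)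
    (M N n : ℤ) :
    jacobiTerm q z (M + 1) N n * (1 - (q ^ 2) ^ (M + N + 1)) =
      jacobiTerm q z M N n + z * q ^ (2 * M + 1) * jacobiTerm q z M N (n - 1) := by
  have hM : invQPochhammer (q ^ 2) (M - n) =
      (1 - (q ^ 2) ^ (M + 1 - n)) * invQPochhammer (q ^ 2) (M + 1 - n) := by
    rw [← invQPochhammer_sub_one hq']
    ring_nf
  have hN : invQPochhammer (q ^ 2) (N + (n - 1)) =
      (1 - (q ^ 2) ^ (N + n)) * invQPochhammer (q ^ 2) (N + n) := by
    rw [← invQPochhammer_sub_one hq', add_sub_assoc]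
  have hpow : q ^ (2 * M + 1) * q ^ (n - 1) ^ 2 = q ^ n ^ 2 * (q ^ 2) ^ (M + 1 - n) := by
    rw [← zpow_natCast q 2, ← zpow_mul, ← zpow_add₀ hq, ← zpow_add₀ hq]
    push_cast
    ring_nf
  have hsplit : (q ^ 2) ^ (M + N + 1) = (q ^ 2) ^ (M + 1 - n) * (q ^ 2) ^ (N + n) := by
    rw [← zpow_add₀ (pow_ne_zero 2 hq)]
    ring_nf
  have hz' : z * z ^ (n - 1) = z ^ n := by rw [← zpow_one_add₀ hz, add_sub_cancel]
  simp only [jacobiTerm]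
  rw [show M - (n - 1) = M + 1 - n by ring, hM, hN, hsplit]
  linear_combination -(invQPochhammer (q ^ 2) (M + 1 - n) * (1 - (q ^ 2) ^ (N + n)) *
    invQPochhammer (q ^ 2) (N + n)) * (z * z ^ (n - 1) * hpow +
      q ^ n ^ 2 * (q ^ 2) ^ (M + 1 - n) * hz')

variable [TopologicalSpace 𝕜]

lemma hasSum_jacobiTerm_zero_zero (q z : 𝕜) : HasSum (jacobiTerm q z 0 0) 1 := by
  have hzero : jacobiTerm q z 0 0 0 = 1 := by simp [jacobiTerm, invQPochhammer, qPochhammer]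
  refine hzero ▸ hasSum_single 0 fun n hn ↦ ?_
  rcases hn.lt_or_gt with hn | hn
  · rw [jacobiTerm, invQPochhammer_of_neg _ (show 0 + n < 0 by lia), mul_zero, mul_zero]
  · rw [jacobiTerm, invQPochhammer_of_neg _ (show 0 - n < 0 by lia), zero_mul, mul_zero]

variable [IsTopologicalRing 𝕜]

lemma hasSum_jacobiTerm_succ (hq : q ≠ 0) (hq' : ∀ n : ℕ, (q ^ 2) ^ (n + 1) ≠ 1) (hz : z ≠ 0)
    {M N : ℕ} {A : 𝕜} (h : HasSum (jacobiTerm q z M N) (A / qPochhammer (q ^ 2) (M + N))) :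
    HasSum (jacobiTerm q z (M + 1 : ℕ) N)
      (A * (1 + z * q ^ (2 * M + 1)) / qPochhammer (q ^ 2) (M + 1 + N)) := by
  have hne : 1 - (q ^ 2) ^ (M + N + 1) ≠ 0 := sub_ne_zero.2 (hq' (M + N)).symm
  have hshift := (Equiv.hasSum_iff (Equiv.subRight (1 : ℤ))).2 h
  convert! (h.add (hshift.mul_left (z * q ^ (2 * M + 1)))).div_const
    (1 - (q ^ 2) ^ (M + N + 1)) using 1
  · ext n
    rw [eq_div_iff hne]
    exact_mod_cast jacobiTerm_succ hq hq' hz M N n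
  · rw [add_right_comm, qPochhammer_succ, ← div_div]
    ring

lemma hasSum_jacobiTerm_of_zero (hq : q ≠ 0) (hq' : ∀ n : ℕ, (q ^ 2) ^ (n + 1) ≠ 1) (hz : z ≠ 0)
    {N : ℕ} {B : 𝕜} (h : HasSum (jacobiTerm q z 0 N) (B / qPochhammer (q ^ 2) N)) (M : ℕ) :
    HasSum (jacobiTerm q z M N) ((∏ j ∈ Finset.range M, (1 + z * q ^ (2 * j + 1))) * B /
      qPochhammer (q ^ 2) (M + N)) := by
  induction M with
  | zero => simpa only [Finset.prod_range_zero, one_mul, zero_add, Nat.cast_zero] using h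
  | succ M ih =>
    rw [Finset.prod_range_succ, mul_right_comm]
    exact hasSum_jacobiTerm_succ hq hq' hz ih

theorem hasSum_jacobiTerm (hq : q ≠ 0) (hq' : ∀ n : ℕ, (q ^ 2) ^ (n + 1) ≠ 1) (hz : z ≠ 0)
    (M N : ℕ) :
    HasSum (jacobiTerm q z M N)
      ((∏ j ∈ Finset.range M, (1 + z * q ^ (2 * j + 1))) *
        (∏ j ∈ Finset.range N, (1 + z⁻¹ * q ^ (2 * j + 1))) / qPochhammer (q ^ 2) (M + N)) := by
  have hbase : HasSum (jacobiTerm q z⁻¹ 0 (0 : ℕ)) (1 / qPochhammer (q ^ 2) 0) := by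
    simpa only [qPochhammer, Finset.prod_range_zero, div_one, Nat.cast_zero] using
      hasSum_jacobiTerm_zero_zero q z⁻¹
  have hN := hasSum_jacobiTerm_of_zero hq hq' (inv_ne_zero hz) hbase N
  refine hasSum_jacobiTerm_of_zero hq hq' hz ?_ M
  simpa only [Function.comp_def, Equiv.neg_apply, Nat.cast_zero, jacobiTerm_inv_neg, mul_one,
    add_zero] using (Equiv.hasSum_iff (Equiv.neg ℤ)).2 hN

end Field

section NormedField

variable {𝕜 : Type*} [NormedField 𝕜] {p q z : 𝕜}

lemma pow_succ_ne_one_of_norm_lt_one (hp : ‖p‖ < 1) (n : ℕ) : p ^ (n + 1) ≠ 1 := fun h ↦ by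
  simpa only [← norm_pow, h, norm_one, lt_self_iff_false] using
    pow_lt_one₀ (norm_nonneg p) hp n.succ_ne_zero

lemma summable_norm_mul_pow (c : 𝕜) (hq : ‖q‖ < 1) {e : ℕ → ℕ} (he : ∀ n, n ≤ e n) :
    Summable fun n ↦ ‖c * q ^ e n‖ := by
  simp_rw [norm_mul, norm_pow]
  exact .mul_left _ <| .of_nonneg_of_le (fun n ↦ by positivity)
    (fun n ↦ pow_le_pow_of_le_one (norm_nonneg q) hq.le (he n))
    (summable_geometric_of_lt_one (norm_nonneg q) hq)

lemma summable_norm_zpow_mul_zpow_sq (hq0 : q ≠ 0) (hq : ‖q‖ < 1) (hz : z ≠ 0) :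
    Summable fun n : ℤ ↦ ‖z ^ n * q ^ n ^ 2‖ := by
  have hnat {w : 𝕜} (hw : w ≠ 0) : Summable fun n : ℕ ↦ ‖w ^ n * q ^ n ^ 2‖ := by
    have hne (n : ℕ) : ‖w ^ n * q ^ n ^ 2‖ ≠ 0 := norm_ne_zero_iff.2 (by positivity)
    have hratio (n : ℕ) :
        ‖‖w ^ (n + 1) * q ^ (n + 1) ^ 2‖‖ / ‖‖w ^ n * q ^ n ^ 2‖‖ = ‖w * q ^ (2 * n + 1)‖ := by
      rw [norm_norm, norm_norm, div_eq_iff (hne n), ← norm_mul]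
      ring_nf
    refine summable_of_ratio_test_tendsto_lt_one zero_lt_one (.of_forall hne) ?_
    simp_rw [hratio]
    exact (summable_norm_mul_pow w hq fun n ↦ by lia).tendsto_atTop_zero
  refine .of_nat_of_neg ?_ ?_
  · exact_mod_cast hnat hz
  · simp_rw [zpow_neg, ← inv_zpow, neg_sq]
    exact_mod_cast hnat (inv_ne_zero hz)

lemma tendsto_invQPochhammer {P : 𝕜} (hP0 : P ≠ 0) (hP : Tendsto (qPochhammer p) atTop (𝓝 P)) :
    Tendsto (invQPochhammer p) atTop (𝓝 P⁻¹) := by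
  rw [← Nat.map_cast_int_atTop, tendsto_map'_iff]
  exact hP.inv₀ hP0

variable [CompleteSpace 𝕜]

lemma multipliable_one_add_mul_pow (c : 𝕜) (hq : ‖q‖ < 1) {e : ℕ → ℕ} (he : ∀ n, n ≤ e n) :
    Multipliable fun n ↦ 1 + c * q ^ e n :=
  multipliable_one_add_of_summable (summable_norm_mul_pow c hq he)

lemma exists_tendsto_qPochhammer (hp : ‖p‖ < 1) :
    ∃ P ≠ 0, Tendsto (qPochhammer p) atTop (𝓝 P) := by
  have hfactor (n : ℕ) : 1 + -1 * p ^ (n + 1) ≠ 0 := by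
    rw [neg_one_mul, ← sub_eq_add_neg]
    exact sub_ne_zero.2 (pow_succ_ne_one_of_norm_lt_one hp n).symm
  refine ⟨_, tprod_one_add_ne_zero_of_summable hfactor
    (summable_norm_mul_pow (-1) hp Nat.le_succ), ?_⟩
  simpa only [neg_one_mul, ← sub_eq_add_neg] using!
    (multipliable_one_add_mul_pow (-1) hp Nat.le_succ).hasProd.tendsto_prod_nat

lemma exists_norm_invQPochhammer_le (hp : ‖p‖ < 1) : ∃ C, ∀ m, ‖invQPochhammer p m‖ ≤ C := by
  obtain ⟨P, hP0, hP⟩ := exists_tendsto_qPochhammer hp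
  obtain ⟨C, hC⟩ := (hP.inv₀ hP0).norm.bddAbove_range
  rw [mem_upperBounds, Set.forall_mem_range] at hC
  refine ⟨C, fun m ↦ ?_⟩
  match m with
  | (N : ℕ) => exact hC N
  | Int.negSucc n => simpa only [invQPochhammer, norm_zero] using (norm_nonneg _).trans (hC 0)

lemma tendsto_tsum_jacobiTerm (hq0 : q ≠ 0) (hq : ‖q‖ < 1) (hz : z ≠ 0) {P : 𝕜} (hP0 : P ≠ 0)
    (hP : Tendsto (qPochhammer (q ^ 2)) atTop (𝓝 P)) :
    Tendsto (fun N : ℕ ↦ ∑' n, jacobiTerm q z N N n) atTop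
      (𝓝 (∑' n : ℤ, z ^ n * q ^ n ^ 2 * (P⁻¹ * P⁻¹))) := by
  obtain ⟨C, hC⟩ := exists_norm_invQPochhammer_le (p := q ^ 2)
    (by simpa only [norm_pow] using pow_lt_one₀ (norm_nonneg q) hq two_ne_zero)
  refine tendsto_tsum_of_dominated_convergence
    ((summable_norm_zpow_mul_zpow_sq hq0 hq hz).mul_right (C * C)) (fun n ↦ ?_)
    (.of_forall fun N n ↦ ?_)
  · have hw := tendsto_invQPochhammer hP0 hP
    have hcast := tendsto_natCast_atTop_atTop (R := ℤ)
    exact ((hw.comp (tendsto_atTop_add_const_right _ (-n) hcast)).mul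
      (hw.comp (tendsto_atTop_add_const_right _ n hcast))).const_mul _
  · rw [jacobiTerm, norm_mul, norm_mul (invQPochhammer _ _)]
    gcongr
    exacts [(norm_nonneg _).trans (hC 0), hC _, hC _]

theorem hasProd_jacobi_triple_product (hq0 : q ≠ 0) (hq : ‖q‖ < 1) (hz : z ≠ 0) :
    HasProd (fun j : ℕ ↦ (1 - (q ^ 2) ^ (j + 1)) *
      ((1 + z * q ^ (2 * j + 1)) * (1 + z⁻¹ * q ^ (2 * j + 1))))
      (∑' n : ℤ, z ^ n * q ^ n ^ 2) := by
  have hp : ‖q ^ 2‖ < 1 := by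
    simpa only [norm_pow] using pow_lt_one₀ (norm_nonneg q) hq two_ne_zero
  have hp' := pow_succ_ne_one_of_norm_lt_one hp
  obtain ⟨P, hP0, hP⟩ := exists_tendsto_qPochhammer hp
  have hodd (c : 𝕜) := multipliable_one_add_mul_pow c hq (e := fun j ↦ 2 * j + 1) fun j ↦ by lia
  have hmult := (multipliable_one_add_mul_pow (-1) hp Nat.le_succ).mul ((hodd z).mul (hodd z⁻¹))
  simp only [neg_one_mul, ← sub_eq_add_neg] at hmult
  have hlim := (hP.mul (tendsto_tsum_jacobiTerm hq0 hq hz hP0 hP)).mul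
    (hP.comp (tendsto_id.atTop_add_atTop tendsto_id))
  have hcancel (S : 𝕜) : P * (S * (P⁻¹ * P⁻¹)) * P = S := by field_simp
  rw [tsum_mul_right, hcancel] at hlim
  refine tendsto_nhds_unique hmult.hasProd.tendsto_prod_nat (hlim.congr fun N ↦ ?_) ▸ hmult.hasProd
  rw [(hasSum_jacobiTerm hq0 hp' hz N N).tsum_eq, Finset.prod_mul_distrib, Finset.prod_mul_distrib,
    Function.comp_apply, id, mul_assoc, div_mul_cancel₀ _ (qPochhammer_ne_zero hp' _)]
  rfl

end NormedField

end JacobiTripleProduct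

section SplittingSums

variable {M : Type*} [AddCommMonoid M] [TopologicalSpace M] [ContinuousAdd M] {a b : M}

lemma hasSum_of_isCompl_range {α β γ : Type*} {f : γ → M} {g : α → γ} {h : β → γ}
    (hg : Function.Injective g) (hh : Function.Injective h)
    (hc : IsCompl (Set.range g) (Set.range h)) (ha : HasSum (f ∘ g) a) (hb : HasSum (f ∘ h) b) :
    HasSum f (a + b) :=
  HasSum.add_isCompl hc (hg.hasSum_range_iff.2 ha) (hh.hasSum_range_iff.2 hb)

lemma hasSum_int_even_add_odd {f : ℤ → M} (ha : HasSum (fun n ↦ f (2 * n)) a)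
    (hb : HasSum (fun n ↦ f (2 * n + 1)) b) : HasSum f (a + b) := by
  refine hasSum_of_isCompl_range (g := fun n ↦ 2 * n) (h := fun n ↦ 2 * n + 1)
    (fun m n h ↦ by simpa using h) (fun m n h ↦ by simpa using h) ?_ ha hb
  have range_even : Set.range (fun n : ℤ ↦ 2 * n) = {n | Even n} := by
    ext n; simp [even_iff_two_dvd, dvd_def]
  have range_odd : Set.range (fun n : ℤ ↦ 2 * n + 1) = {n | Odd n} := by
    ext n; simp [Odd]
  rw [range_even, range_odd]
  exact Int.isCompl_even_odd

lemma isCompl_range_int_add_sub :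
    IsCompl (Set.range fun p : ℤ × ℤ ↦ (p.1 + p.2, p.1 - p.2))
      (Set.range fun p : ℤ × ℤ ↦ (p.1 + p.2 + 1, p.1 - p.2)) := by
  rw [isCompl_iff, Set.disjoint_left, codisjoint_iff, Set.top_eq_univ, Set.eq_univ_iff_forall]
  refine ⟨?_, ?_⟩
  · rintro _ ⟨⟨a, b⟩, rfl⟩ ⟨⟨a', b'⟩, h⟩
    simp only [Prod.mk.injEq] at h
    omega
  · rintro ⟨m, n⟩
    rcases Int.even_or_odd' (m + n) with ⟨k, hk | hk⟩
    · refine Or.inl ⟨(k, k - n), ?_⟩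
      simp only [Prod.mk.injEq]
      omega
    · refine Or.inr ⟨(k, k - n), ?_⟩
      simp only [Prod.mk.injEq]
      omega

lemma hasSum_int_prod_add_sub {f : ℤ × ℤ → M}
    (ha : HasSum (fun p : ℤ × ℤ ↦ f (p.1 + p.2, p.1 - p.2)) a)
    (hb : HasSum (fun p : ℤ × ℤ ↦ f (p.1 + p.2 + 1, p.1 - p.2)) b) : HasSum f (a + b) := by
  refine hasSum_of_isCompl_range ?_ ?_ isCompl_range_int_add_sub ha hb <;>
  · rintro ⟨m, n⟩ ⟨m', n'⟩ h
    simp only [Prod.mk.injEq] at h ⊢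
    omega

end SplittingSums

section ThetaIdentities

open HurwitzZeta

/-- The theta constant `θ₂` at `τ = i t`, that is, as a function of `t` for the nome
`q = exp (-π t)`. -/
noncomputable def thetaTwo (t : ℝ) : ℝ := ∑' n : ℤ, Real.exp (-π * (n + 1 / 2) ^ 2 * t)

/-- The theta constant `θ₃` at `τ = i t`, that is, as a function of `t` for the nome
`q = exp (-π t)`. -/
noncomputable def thetaThree (t : ℝ) : ℝ := ∑' n : ℤ, Real.exp (-π * n ^ 2 * t)

/-- The theta constant `θ₄` at `τ = i t`, that is, as a function of `t` for the nome
`q = exp (-π t)`. -/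
noncomputable def thetaFour (t : ℝ) : ℝ := ∑' n : ℤ, (-1) ^ n * Real.exp (-π * n ^ 2 * t)

variable {t : ℝ}

lemma hasSum_thetaTwo (ht : 0 < t) :
    HasSum (fun n : ℤ ↦ Real.exp (-π * (n + 1 / 2) ^ 2 * t)) (thetaTwo t) :=
  (hasSum_int_evenKernel (1 / 2) ht).summable.hasSum

lemma hasSum_thetaThree (ht : 0 < t) :
    HasSum (fun n : ℤ ↦ Real.exp (-π * n ^ 2 * t)) (thetaThree t) := by
  have h := hasSum_int_evenKernel 0 ht
  simp only [add_zero] at h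
  exact h.summable.hasSum

lemma hasSum_thetaFour (ht : 0 < t) :
    HasSum (fun n : ℤ ↦ (-1) ^ n * Real.exp (-π * n ^ 2 * t)) (thetaFour t) :=
  (Summable.of_norm (by simpa [abs_zpow] using (hasSum_thetaThree ht).summable)).hasSum

lemma thetaTwo_eq_evenKernel (ht : 0 < t) : thetaTwo t = evenKernel (1 / 2 : ℝ) t :=
  (hasSum_thetaTwo ht).unique (hasSum_int_evenKernel (1 / 2) ht)

lemma thetaThree_eq_cosKernel (ht : 0 < t) : thetaThree t = cosKernel 0 t := by
  have h := hasSum_int_evenKernel 0 ht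
  simp only [add_zero, QuotientAddGroup.mk_zero] at h
  rw [← evenKernel_eq_cosKernel_of_zero]
  exact (hasSum_thetaThree ht).unique h

lemma thetaFour_eq_cosKernel (ht : 0 < t) : thetaFour t = cosKernel (1 / 2 : ℝ) t := by
  rw [← Complex.ofReal_inj]
  refine HasSum.unique ?_ (hasSum_int_cosKernel (1 / 2) ht)
  convert Complex.hasSum_ofReal.2 (hasSum_thetaFour ht) using 2 with n
  push_cast
  congr 1
  rw [show (2 * π * Complex.I * (1 / 2) * n : ℂ) = n * (π * Complex.I) by ring,
    Complex.exp_int_mul, Complex.exp_pi_mul_I]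

lemma thetaTwo_eq_thetaFour_inv (ht : 0 < t) : thetaTwo t = 1 / √t * thetaFour (1 / t) := by
  rw [thetaTwo_eq_evenKernel ht, thetaFour_eq_cosKernel (by positivity),
    evenKernel_functional_equation, Real.sqrt_eq_rpow]

lemma thetaThree_eq_thetaThree_inv (ht : 0 < t) :
    thetaThree t = 1 / √t * thetaThree (1 / t) := by
  rw [thetaThree_eq_cosKernel ht, thetaThree_eq_cosKernel (by positivity),
    ← evenKernel_eq_cosKernel_of_zero, evenKernel_functional_equation,
    evenKernel_eq_cosKernel_of_zero, Real.sqrt_eq_rpow]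

lemma thetaFour_eq_thetaTwo_inv (ht : 0 < t) : thetaFour t = 1 / √t * thetaTwo (1 / t) := by
  have hsqrt : √t ≠ 0 := (Real.sqrt_pos.2 ht).ne'
  rw [thetaTwo_eq_thetaFour_inv (one_div_pos.2 ht), one_div_one_div, Real.sqrt_div zero_le_one,
    Real.sqrt_one]
  field_simp

lemma thetaTwo_pos (ht : 0 < t) : 0 < thetaTwo t :=
  (hasSum_thetaTwo ht).summable.tsum_pos (fun _ ↦ (Real.exp_pos _).le) 0 (Real.exp_pos _)

lemma thetaThree_pos (ht : 0 < t) : 0 < thetaThree t :=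
  (hasSum_thetaThree ht).summable.tsum_pos (fun _ ↦ (Real.exp_pos _).le) 0 (Real.exp_pos _)

lemma thetaFour_pos (ht : 0 < t) : 0 < thetaFour t := by
  rw [thetaFour_eq_thetaTwo_inv ht]
  exact mul_pos (by positivity) (thetaTwo_pos (by positivity))

lemma thetaThree_eq_add (ht : 0 < t) :
    thetaThree t = thetaThree (4 * t) + thetaTwo (4 * t) := by
  refine (hasSum_thetaThree ht).unique (hasSum_int_even_add_odd ?_ ?_)
  · convert hasSum_thetaThree (by positivity : 0 < 4 * t) using 3 with n
    push_cast; ring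
  · convert hasSum_thetaTwo (by positivity : 0 < 4 * t) using 3 with n
    push_cast; ring

lemma thetaFour_eq_sub (ht : 0 < t) :
    thetaFour t = thetaThree (4 * t) - thetaTwo (4 * t) := by
  rw [sub_eq_add_neg]
  refine (hasSum_thetaFour ht).unique (hasSum_int_even_add_odd ?_ ?_)
  · convert hasSum_thetaThree (by positivity : 0 < 4 * t) using 2 with n
    rw [Even.neg_one_zpow (even_two_mul n), one_mul]
    push_cast; ring_nf
  · refine (hasSum_thetaTwo (by positivity : 0 < 4 * t)).neg.congr_fun fun n ↦ ?_
    rw [Odd.neg_one_zpow (odd_two_mul_add_one n), neg_one_mul]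
    push_cast; ring_nf

-- The square is a double sum over `(m, n)`; its terms with `m + n` even and odd are
-- `(m, n) = (a + b, a - b)` and `(a + b + 1, a - b)`.
lemma thetaThree_sq (ht : 0 < t) :
    thetaThree t ^ 2 = thetaThree (2 * t) ^ 2 + thetaTwo (2 * t) ^ 2 := by
  have hasSum_sq {f : ℤ → ℝ} {a : ℝ} (h : HasSum f a) (hf : ∀ n, 0 ≤ f n) :
      HasSum (fun p : ℤ × ℤ ↦ f p.1 * f p.2) (a ^ 2) :=
    sq a ▸ h.mul h (h.summable.mul_of_nonneg h.summable hf hf)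
  refine (hasSum_sq (hasSum_thetaThree ht) fun _ ↦ (Real.exp_pos _).le).unique
    (hasSum_int_prod_add_sub ?_ ?_)
  · convert hasSum_sq (hasSum_thetaThree (t := 2 * t) (by positivity))
      fun _ ↦ (Real.exp_pos _).le using 2 with p
    simp only [← Real.exp_add]
    push_cast; ring_nf
  · convert hasSum_sq (hasSum_thetaTwo (t := 2 * t) (by positivity))
      fun _ ↦ (Real.exp_pos _).le using 2 with p
    simp only [← Real.exp_add]
    push_cast; ring_nf

-- The image of `thetaThree_sq` under `t ↦ 1 / (2 t)`.
lemma thetaThree_sq_add_thetaFour_sq (ht : 0 < t) :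
    thetaThree t ^ 2 + thetaFour t ^ 2 = 2 * thetaThree (2 * t) ^ 2 := by
  have h := thetaThree_sq (t := 1 / (2 * t)) (by positivity)
  rw [show 2 * (1 / (2 * t)) = 1 / t by field_simp,
    thetaThree_eq_thetaThree_inv (t := 1 / (2 * t)) (by positivity),
    thetaThree_eq_thetaThree_inv (t := 1 / t) (by positivity),
    thetaTwo_eq_thetaFour_inv (t := 1 / t) (by positivity)] at h
  simp only [one_div_one_div, mul_pow, div_pow, one_pow] at h
  rw [Real.sq_sqrt (by positivity), Real.sq_sqrt (by positivity)] at h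
  field_simp at h
  exact h.symm

lemma thetaFour_sq (ht : 0 < t) :
    thetaFour t ^ 2 = thetaThree (2 * t) ^ 2 - thetaTwo (2 * t) ^ 2 := by
  linarith [thetaThree_sq ht, thetaThree_sq_add_thetaFour_sq ht]

lemma thetaTwo_sq (ht : 0 < t) :
    thetaTwo t ^ 2 = 2 * thetaTwo (2 * t) * thetaThree (2 * t) := by
  have hsq₃ := thetaThree_sq (half_pos ht)
  have hsq₄ := thetaFour_sq (half_pos ht)
  rw [thetaThree_eq_add (half_pos ht)] at hsq₃
  rw [thetaFour_eq_sub (half_pos ht)] at hsq₄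
  rw [show 4 * (t / 2) = 2 * t by ring, show 2 * (t / 2) = t by ring] at hsq₃ hsq₄
  linarith

theorem thetaThree_pow_four (ht : 0 < t) :
    thetaThree t ^ 4 = thetaTwo t ^ 4 + thetaFour t ^ 4 := by
  linear_combination (thetaThree t ^ 2 + thetaThree (2 * t) ^ 2 + thetaTwo (2 * t) ^ 2) *
      thetaThree_sq ht -
    (thetaFour t ^ 2 + thetaThree (2 * t) ^ 2 - thetaTwo (2 * t) ^ 2) * thetaFour_sq ht -
    (thetaTwo t ^ 2 + 2 * thetaTwo (2 * t) * thetaThree (2 * t)) * thetaTwo_sq ht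

lemma thetaFour_two_mul_sq (ht : 0 < t) :
    thetaFour (2 * t) ^ 2 = thetaThree t * thetaFour t := by
  rw [← sq_eq_sq₀ (sq_nonneg _) (mul_pos (thetaThree_pos ht) (thetaFour_pos ht)).le]
  linear_combination thetaThree_sq ht * (-thetaFour t ^ 2) -
    (thetaThree (2 * t) ^ 2 + thetaTwo (2 * t) ^ 2) * thetaFour_sq ht -
    thetaThree_pow_four (t := 2 * t) (by positivity)

lemma thetaThree_half_eq : thetaThree (1 / 2) = (1 + √2) * thetaFour (1 / 2) := by
  have hadd := thetaThree_eq_add (t := 1 / 2) (by norm_num)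
  have hsub := thetaFour_eq_sub (t := 1 / 2) (by norm_num)
  have hinv := thetaTwo_eq_thetaFour_inv (t := 2) two_pos
  rw [show (4 : ℝ) * (1 / 2) = 2 by norm_num] at hadd hsub
  rw [one_div, inv_mul_eq_div, eq_div_iff (by positivity)] at hinv
  have hsqrt : √2 * √2 = (2 : ℝ) := Real.mul_self_sqrt zero_le_two
  linear_combination hadd - hsub + √2 * hinv - thetaTwo 2 * hsqrt

end ThetaIdentities

section Nome

open Filter Topology

/-- The nome `q = exp (-π t)`, for `τ = i t`. -/
noncomputable def nome (t : ℝ) : ℝ := Real.exp (-π * t)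

/-- The power series `∑ q ^ e n`, in terms of which the theta constants are written as functions
of the nome. -/
noncomputable def nomeSeries (e : ℕ → ℕ) (q : ℝ) : ℝ := ∑' n, q ^ e n

variable {t : ℝ} {e : ℕ → ℕ} {q : ℝ}

lemma nome_pos (t : ℝ) : 0 < nome t := Real.exp_pos _

lemma nome_lt_one (ht : 0 < t) : nome t < 1 :=
  Real.exp_lt_one_iff.2 (mul_neg_of_neg_of_pos (neg_lt_zero.2 Real.pi_pos) ht)

lemma abs_nome_lt_one (ht : 0 < t) : |nome t| < 1 :=
  (abs_of_pos (nome_pos t)).trans_lt (nome_lt_one ht)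

lemma hasDerivAt_exp_const_mul (c t : ℝ) :
    HasDerivAt (fun t ↦ Real.exp (c * t)) (c * Real.exp (c * t)) t := by
  simpa only [mul_one, mul_comm (Real.exp _)] using ((hasDerivAt_id' t).const_mul c).exp

lemma tendsto_exp_const_mul_atTop {c : ℝ} (hc : c < 0) :
    Tendsto (fun t ↦ Real.exp (c * t)) atTop (𝓝 0) :=
  Real.tendsto_exp_atBot.comp (tendsto_id.const_mul_atTop_of_neg hc)

lemma tendsto_nome : Tendsto nome atTop (𝓝 0) :=
  tendsto_exp_const_mul_atTop (neg_lt_zero.2 Real.pi_pos)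

lemma tendsto_logDeriv_exp_mul_comp_nome {W : ℝ → ℝ} (hW : AnalyticAt ℝ W 0) (hW0 : W 0 ≠ 0)
    (c : ℝ) : Tendsto (logDeriv fun t ↦ Real.exp (c * t) * W (nome t)) atTop (𝓝 c) := by
  have hlim : Tendsto (fun t ↦ c + deriv W (nome t) * (-π * nome t) / W (nome t)) atTop (𝓝 c) := by
    have h := (((hW.deriv.continuousAt.tendsto.comp tendsto_nome).mul
      (tendsto_nome.const_mul (-π))).div (hW.continuousAt.tendsto.comp tendsto_nome)
      hW0).const_add c
    rwa [mul_zero, mul_zero, zero_div, add_zero] at h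
  refine hlim.congr' ?_
  filter_upwards [tendsto_nome.eventually hW.eventually_analyticAt,
    tendsto_nome.eventually (hW.continuousAt.eventually_ne hW0)] with t hWt hWt0
  have hderiv : HasDerivAt (fun t ↦ Real.exp (c * t) * W (nome t)) _ t :=
    (hasDerivAt_exp_const_mul c t).mul
      (hWt.differentiableAt.hasDerivAt.comp t (hasDerivAt_exp_const_mul (-π) t))
  rw [logDeriv_apply, hderiv.deriv, ← nome]
  field_simp

lemma hasSum_nomeSeries (he : ∀ n, n ≤ e n) (hq : |q| < 1) :
    HasSum (fun n ↦ q ^ e n) (nomeSeries e q) := by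
  have h : Summable fun n ↦ ‖1 * q ^ e n‖ := summable_norm_mul_pow 1 hq he
  simp only [one_mul] at h
  exact h.of_norm.hasSum

lemma analyticAt_nomeSeries (he : ∀ n, n ≤ e n) (hq : |q| < 1) :
    AnalyticAt ℝ (nomeSeries e) q := by
  obtain ⟨r, hqr, hr⟩ := exists_between hq
  have hr0 : 0 ≤ r := (abs_nonneg q).trans hqr.le
  have hdiff : DifferentiableOn ℂ (fun z : ℂ ↦ ∑' n, z ^ e n) (Metric.ball 0 r) := by
    refine Complex.differentiableOn_tsum_of_summable_norm (u := fun n ↦ r ^ n)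
      (summable_geometric_of_lt_one hr0 hr) (fun n ↦ by fun_prop) Metric.isOpen_ball
      fun n z hz ↦ ?_
    rw [mem_ball_zero_iff] at hz
    rw [norm_pow]
    exact (pow_le_pow_left₀ (norm_nonneg _) hz.le _).trans
      (pow_le_pow_of_le_one hr0 hr.le (he n))
  have han : AnalyticAt ℂ (fun z : ℂ ↦ ∑' n, z ^ e n) q :=
    hdiff.analyticAt (Metric.isOpen_ball.mem_nhds (by simpa using hqr))
  convert han.re_ofReal using 2 with x
  rw [nomeSeries, ← Complex.ofReal_re (∑' n, x ^ e n), Complex.ofReal_tsum]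
  simp only [Complex.ofReal_pow]

lemma nomeSeries_zero (he : ∀ n, n ≤ e n) (h0 : e 0 = 0) : nomeSeries e 0 = 1 := by
  rw [nomeSeries, tsum_eq_single 0 fun n hn ↦ zero_pow (by have := he n; lia), h0, pow_zero]

lemma tendsto_nomeSeries_comp_nome (he : ∀ n, n ≤ e n) (h0 : e 0 = 0) :
    Tendsto (fun t ↦ nomeSeries e (nome t)) atTop (𝓝 1) :=
  nomeSeries_zero he h0 ▸
    (analyticAt_nomeSeries he (q := 0) (by simp)).continuousAt.tendsto.comp tendsto_nome

lemma le_mul_succ_self (n : ℕ) : n ≤ n * (n + 1) := Nat.le_mul_of_pos_right n n.succ_pos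

lemma thetaThree_eq_nomeSeries (ht : 0 < t) :
    thetaThree t = 2 * nomeSeries (· ^ 2) (nome t) - 1 := by
  have h := hasSum_nomeSeries (fun n ↦ Nat.le_self_pow two_ne_zero n) (abs_nome_lt_one ht)
  have hsum := HasSum.of_nat_of_neg (f := fun n : ℤ ↦ Real.exp (-π * n ^ 2 * t))
    (h.congr_fun fun n ↦ ?_) (h.congr_fun fun n ↦ ?_)
  · rw [(hasSum_thetaThree ht).unique hsum]
    simp only [Int.cast_zero, ne_eq, OfNat.ofNat_ne_zero, not_false_eq_true, zero_pow, mul_zero,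
      zero_mul, Real.exp_zero]
    ring
  all_goals
    rw [nome, ← Real.exp_nat_mul]
    push_cast; ring_nf

lemma thetaTwo_eq_nomeSeries (ht : 0 < t) :
    thetaTwo t = Real.exp (-(π / 4) * t) * (2 * nomeSeries (fun n ↦ n * (n + 1)) (nome t)) := by
  have h := (hasSum_nomeSeries le_mul_succ_self (abs_nome_lt_one ht)).mul_left
    (Real.exp (-(π / 4) * t))
  rw [two_mul, mul_add]
  refine (hasSum_thetaTwo ht).unique (HasSum.of_nat_of_neg_add_one (h.congr_fun fun n ↦ ?_)
    (h.congr_fun fun n ↦ ?_))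
  all_goals
    rw [nome, ← Real.exp_nat_mul, ← Real.exp_add]
    push_cast; ring_nf

lemma tendsto_thetaThree : Tendsto thetaThree atTop (𝓝 1) := by
  have h := ((tendsto_nomeSeries_comp_nome (fun n ↦ Nat.le_self_pow two_ne_zero n)
    (zero_pow two_ne_zero)).const_mul 2).sub_const 1
  rw [show (2 * 1 - 1 : ℝ) = 1 by norm_num] at h
  exact h.congr' ((eventually_gt_atTop 0).mono fun t ht ↦ (thetaThree_eq_nomeSeries ht).symm)

lemma tendsto_thetaTwo : Tendsto thetaTwo atTop (𝓝 0) := by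
  have h := (tendsto_exp_const_mul_atTop (c := -(π / 4)) (by linarith [Real.pi_pos])).mul
    ((tendsto_nomeSeries_comp_nome le_mul_succ_self (zero_mul _)).const_mul 2)
  rw [zero_mul] at h
  exact h.congr' ((eventually_gt_atTop 0).mono fun t ht ↦ (thetaTwo_eq_nomeSeries ht).symm)

lemma tendsto_thetaFour : Tendsto thetaFour atTop (𝓝 1) := by
  have h4 : Tendsto (fun t : ℝ ↦ 4 * t) atTop atTop := tendsto_id.const_mul_atTop four_pos
  have h := (tendsto_thetaThree.comp h4).sub (tendsto_thetaTwo.comp h4)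
  rw [sub_zero] at h
  exact h.congr' ((eventually_gt_atTop 0).mono fun t ht ↦ (thetaFour_eq_sub ht).symm)

end Nome

section ThetaModulus

open Filter Topology Set

/-- The elliptic modulus `k = θ₂² / θ₃²` as a function of `t`. -/
noncomputable def thetaModulus (t : ℝ) : ℝ := (thetaTwo t / thetaThree t) ^ 2

/-- The analytic function `W` of the nome `q` with `k = √q * W q`. -/
noncomputable def modulusSeries (q : ℝ) : ℝ :=
  (2 * nomeSeries (fun n ↦ n * (n + 1)) q / (2 * nomeSeries (· ^ 2) q - 1)) ^ 2

variable {t : ℝ}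

lemma thetaModulus_pos (ht : 0 < t) : 0 < thetaModulus t :=
  pow_pos (div_pos (thetaTwo_pos ht) (thetaThree_pos ht)) 2

lemma thetaThree_two_mul_sq_mul_one_add (ht : 0 < t) :
    thetaThree (2 * t) ^ 2 * (1 + thetaModulus (2 * t)) = thetaThree t ^ 2 := by
  have h3 : thetaThree (2 * t) ≠ 0 := (thetaThree_pos (by positivity)).ne'
  rw [thetaModulus, thetaThree_sq ht]
  field_simp

lemma thetaThree_two_mul_sq_mul_one_sub (ht : 0 < t) :
    thetaThree (2 * t) ^ 2 * (1 - thetaModulus (2 * t)) = thetaFour t ^ 2 := by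
  have h3 : thetaThree (2 * t) ≠ 0 := (thetaThree_pos (by positivity)).ne'
  rw [thetaModulus, thetaFour_sq ht]
  field_simp

lemma thetaModulus_sq_mul_one_add_sq (ht : 0 < t) :
    thetaModulus t ^ 2 * (1 + thetaModulus (2 * t)) ^ 2 = 4 * thetaModulus (2 * t) := by
  have h3 : thetaThree t ≠ 0 := (thetaThree_pos ht).ne'
  have h3' : thetaThree (2 * t) ≠ 0 := (thetaThree_pos (by positivity)).ne'
  have hsq : thetaModulus t * (1 + thetaModulus (2 * t)) =
      2 * (thetaTwo (2 * t) / thetaThree (2 * t)) := by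
    rw [eq_div_of_mul_eq (pow_ne_zero 2 h3')
      ((mul_comm _ _).trans (thetaThree_two_mul_sq_mul_one_add ht)), thetaModulus, div_pow,
      thetaTwo_sq ht]
    field_simp
  rw [← mul_pow, hsq, thetaModulus]
  ring

lemma one_sub_thetaModulus_sq (ht : 0 < t) :
    1 - thetaModulus t ^ 2 = (thetaFour t / thetaThree t) ^ 4 := by
  have h3 : thetaThree t ≠ 0 := (thetaThree_pos ht).ne'
  rw [thetaModulus, div_pow, div_pow]
  field_simp
  linear_combination thetaThree_pow_four ht

lemma thetaModulus_lt_one (ht : 0 < t) : thetaModulus t < 1 := by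
  have h := pow_pos (div_pos (thetaFour_pos ht) (thetaThree_pos ht)) 4
  rw [← one_sub_thetaModulus_sq ht, sub_pos] at h
  exact lt_of_pow_lt_pow_left₀ 2 zero_le_one (by rwa [one_pow])

lemma thetaModulus_one_div (ht : 0 < t) :
    thetaModulus (1 / t) = (thetaFour t / thetaThree t) ^ 2 := by
  have hsqrt : 1 / √(1 / t) ≠ 0 := by positivity
  rw [thetaModulus, thetaTwo_eq_thetaFour_inv (one_div_pos.2 ht),
    thetaThree_eq_thetaThree_inv (one_div_pos.2 ht), one_div_one_div, mul_div_mul_left _ _ hsqrt]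

lemma thetaModulus_eq_modulusSeries (ht : 0 < t) :
    thetaModulus t = Real.exp (-(π / 2) * t) * modulusSeries (nome t) := by
  rw [thetaModulus, thetaTwo_eq_nomeSeries ht, thetaThree_eq_nomeSeries ht, mul_div_assoc, mul_pow,
    ← Real.exp_nat_mul, modulusSeries]
  push_cast
  ring_nf

lemma analyticAt_modulusSeries {q : ℝ} (hq : |q| < 1) (hne : 2 * nomeSeries (· ^ 2) q - 1 ≠ 0) :
    AnalyticAt ℝ modulusSeries q :=
  ((analyticAt_const.mul (analyticAt_nomeSeries le_mul_succ_self hq)).div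
    ((analyticAt_const.mul (analyticAt_nomeSeries (fun n ↦ Nat.le_self_pow two_ne_zero n) hq)).sub
      analyticAt_const) hne).pow 2

lemma differentiableAt_thetaModulus (ht : 0 < t) : DifferentiableAt ℝ thetaModulus t := by
  have hW : DifferentiableAt ℝ modulusSeries (nome t) :=
    (analyticAt_modulusSeries (abs_nome_lt_one ht)
      (thetaThree_eq_nomeSeries ht ▸ (thetaThree_pos ht).ne')).differentiableAt
  refine ((hasDerivAt_exp_const_mul (-(π / 2)) t).differentiableAt.mul
    (hW.comp t (hasDerivAt_exp_const_mul (-π) t).differentiableAt)).congr_of_eventuallyEq ?_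
  exact (lt_mem_nhds ht).mono fun s hs ↦ thetaModulus_eq_modulusSeries hs

lemma tendsto_logDeriv_thetaModulus : Tendsto (logDeriv thetaModulus) atTop (𝓝 (-(π / 2))) := by
  have h₂ : nomeSeries (fun n ↦ n * (n + 1)) 0 = 1 := nomeSeries_zero le_mul_succ_self (zero_mul _)
  have h₃ : nomeSeries (· ^ 2) 0 = 1 :=
    nomeSeries_zero (fun n ↦ Nat.le_self_pow two_ne_zero n) (zero_pow two_ne_zero)
  refine (tendsto_logDeriv_exp_mul_comp_nome (W := modulusSeries)
    (analyticAt_modulusSeries (by simp) (by rw [h₃]; norm_num))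
    (by rw [modulusSeries, h₂, h₃]; norm_num) _).congr' ?_
  filter_upwards [eventually_gt_atTop 0] with t ht
  have h : thetaModulus =ᶠ[𝓝 t] fun t ↦ Real.exp (-(π / 2) * t) * modulusSeries (nome t) :=
    (lt_mem_nhds ht).mono fun s hs ↦ thetaModulus_eq_modulusSeries hs
  rw [logDeriv_apply, logDeriv_apply, h.deriv_eq, h.eq_of_nhds]

lemma eq_of_comp_two_mul_eq {X : Type*} [TopologicalSpace X] [T2Space X] {f : ℝ → X} {c : X}
    (hf : ∀ t, 0 < t → f (2 * t) = f t) (hc : Tendsto f atTop (𝓝 c)) (ht : 0 < t) : f t = c := by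
  have hpow (n : ℕ) : f (2 ^ n * t) = f t := by
    induction n with
    | zero => rw [pow_zero, one_mul]
    | succ n ih => rw [pow_succ', mul_assoc, hf _ (by positivity), ih]
  have htop : Tendsto (fun n : ℕ ↦ (2 : ℝ) ^ n * t) atTop atTop :=
    (tendsto_pow_atTop_atTop_of_one_lt one_lt_two).atTop_mul_const ht
  exact tendsto_nhds_unique (tendsto_const_nhds.congr fun n ↦ (hpow n).symm) (hc.comp htop)

lemma hasDerivAt_thetaModulus_logDeriv (ht : 0 < t) :
    HasDerivAt thetaModulus (thetaModulus t * logDeriv thetaModulus t) t := by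
  rw [logDeriv_apply, mul_div_cancel₀ _ (thetaModulus_pos ht).ne']
  exact (differentiableAt_thetaModulus ht).hasDerivAt

-- The derivative of `thetaModulus_sq_mul_one_add_sq`.
lemma logDeriv_thetaModulus_mul_one_add (ht : 0 < t) :
    logDeriv thetaModulus t * (1 + thetaModulus (2 * t)) =
      logDeriv thetaModulus (2 * t) * (1 - thetaModulus (2 * t)) := by
  have hk := hasDerivAt_thetaModulus_logDeriv ht
  have hK : HasDerivAt (fun t ↦ thetaModulus (2 * t)) _ t :=
    (hasDerivAt_thetaModulus_logDeriv (t := 2 * t) (by positivity)).comp t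
      ((hasDerivAt_id' t).const_mul 2)
  have hderiv := ((hk.pow 2).mul ((hK.const_add 1).pow 2)).unique
    ((hK.const_mul 4).congr_of_eventuallyEq
      ((lt_mem_nhds ht).mono fun s hs ↦ thetaModulus_sq_mul_one_add_sq hs))
  have hne : 2 * thetaModulus t ^ 2 * (1 + thetaModulus (2 * t)) ≠ 0 := by
    have := thetaModulus_pos ht
    have := thetaModulus_pos (t := 2 * t) (by positivity)
    positivity
  refine mul_left_cancel₀ hne ?_
  simp only [Pi.pow_apply, Nat.cast_ofNat, Nat.add_one_sub_one, pow_one] at hderiv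
  linear_combination
    hderiv - 2 * logDeriv thetaModulus (2 * t) * thetaModulus_sq_mul_one_add_sq ht

theorem logDeriv_thetaModulus (ht : 0 < t) :
    logDeriv thetaModulus t = -(π / 2) * thetaFour t ^ 4 := by
  rw [← div_eq_iff (pow_pos (thetaFour_pos ht) 4).ne']
  refine eq_of_comp_two_mul_eq (f := fun t ↦ logDeriv thetaModulus t / thetaFour t ^ 4)
    (fun t ht ↦ ?_) ?_ ht
  · have h4 := thetaFour_pos ht
    have h4' := thetaFour_pos (t := 2 * t) (by positivity)
    have hpow : thetaFour (2 * t) ^ 4 = thetaThree t ^ 2 * thetaFour t ^ 2 := by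
      rw [← mul_pow, ← thetaFour_two_mul_sq ht, ← pow_mul]
    rw [div_eq_div_iff (by positivity) (by positivity), hpow]
    linear_combination -(thetaFour t ^ 2 * thetaThree (2 * t) ^ 2) *
        logDeriv_thetaModulus_mul_one_add ht +
      logDeriv thetaModulus t * thetaFour t ^ 2 * thetaThree_two_mul_sq_mul_one_add ht -
      logDeriv thetaModulus (2 * t) * thetaFour t ^ 2 * thetaThree_two_mul_sq_mul_one_sub ht
  · have h := tendsto_logDeriv_thetaModulus.div (tendsto_thetaFour.pow 4) (by norm_num)
    rwa [one_pow, div_one] at h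

theorem hasDerivAt_thetaModulus (ht : 0 < t) :
    HasDerivAt thetaModulus (-(π / 2 * thetaModulus t * thetaFour t ^ 4)) t := by
  refine (hasDerivAt_thetaModulus_logDeriv ht).congr_deriv ?_
  rw [logDeriv_thetaModulus ht]
  ring

lemma continuousOn_thetaModulus : ContinuousOn thetaModulus (Ioi 0) :=
  fun _ ht ↦ (differentiableAt_thetaModulus ht).continuousAt.continuousWithinAt

lemma strictAntiOn_thetaModulus : StrictAntiOn thetaModulus (Ioi 0) := by
  refine strictAntiOn_of_deriv_neg (convex_Ioi 0) continuousOn_thetaModulus fun t ht ↦ ?_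
  rw [interior_Ioi] at ht
  have hk := thetaModulus_pos ht
  have h4 := thetaFour_pos ht
  rw [(hasDerivAt_thetaModulus ht).deriv, neg_lt_zero]
  positivity

lemma tendsto_thetaModulus_atTop : Tendsto thetaModulus atTop (𝓝 0) := by
  have h := (tendsto_thetaTwo.div tendsto_thetaThree one_ne_zero).pow 2
  rwa [zero_div, zero_pow two_ne_zero] at h

lemma tendsto_thetaModulus_zero : Tendsto thetaModulus (𝓝[>] 0) (𝓝 1) := by
  have h := ((tendsto_thetaFour.div tendsto_thetaThree one_ne_zero).pow 2).comp
    tendsto_inv_nhdsGT_zero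
  rw [div_one, one_pow] at h
  refine h.congr' ?_
  filter_upwards [self_mem_nhdsWithin] with t (ht : 0 < t)
  rw [← one_div_one_div t, thetaModulus_one_div (one_div_pos.2 ht), one_div_one_div, one_div]
  rfl

lemma image_thetaModulus : thetaModulus '' Ioi 0 = Ioo 0 1 := by
  refine Subset.antisymm ?_ fun k hk ↦ ?_
  · rintro _ ⟨t, ht, rfl⟩
    exact ⟨thetaModulus_pos ht, thetaModulus_lt_one ht⟩
  · obtain ⟨s, hks, hs⟩ := ((tendsto_thetaModulus_zero.eventually (lt_mem_nhds hk.2)).and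
      self_mem_nhdsWithin).exists
    obtain ⟨t, hkt, ht⟩ := ((tendsto_thetaModulus_atTop.eventually (gt_mem_nhds hk.1)).and
      (eventually_gt_atTop 0)).exists
    exact isPreconnected_Ioi.intermediate_value ht hs continuousOn_thetaModulus ⟨hkt.le, hks.le⟩

lemma thetaFour_sq_le_thetaThree_sq (ht : 0 < t) : thetaFour t ^ 2 ≤ thetaThree t ^ 2 := by
  linarith [thetaFour_sq ht, thetaThree_sq ht, sq_nonneg (thetaTwo (2 * t))]

theorem gaussIntegral_thetaThree_sq_thetaFour_sq (ht : 0 < t) :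
    gaussIntegral (thetaThree t ^ 2) (thetaFour t ^ 2) = π / 2 := by
  refine eq_of_comp_two_mul_eq
    (f := fun t ↦ gaussIntegral (thetaThree t ^ 2) (thetaFour t ^ 2)) (fun t ht ↦ ?_) ?_ ht
  · have hgeom : √(thetaThree t ^ 2 * thetaFour t ^ 2) = thetaFour (2 * t) ^ 2 := by
      rw [thetaFour_two_mul_sq ht, ← mul_pow,
        Real.sqrt_sq (mul_pos (thetaThree_pos ht) (thetaFour_pos ht)).le]
    rw [← gaussIntegral_landen (pow_pos (thetaThree_pos ht) 2) (pow_pos (thetaFour_pos ht) 2),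
      hgeom, thetaThree_sq_add_thetaFour_sq ht, mul_div_cancel_left₀ _ two_ne_zero]
  · have hlim {f : ℝ → ℝ} (hf : Tendsto f atTop (𝓝 1)) :
        Tendsto (fun t ↦ π / 2 / f t ^ 2) atTop (𝓝 (π / 2)) := by
      have h := tendsto_const_nhds (x := π / 2).div (hf.pow 2) (by norm_num)
      rwa [one_pow, div_one] at h
    refine tendsto_of_tendsto_of_tendsto_of_le_of_le' (hlim tendsto_thetaThree)
      (hlim tendsto_thetaFour) ?_ ?_ <;>
    filter_upwards [eventually_gt_atTop 0] with t ht
    · have h3 := pow_pos (thetaThree_pos ht) 2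
      have h4 := pow_pos (thetaFour_pos ht) 2
      rw [← gaussIntegral_self h3]
      exact gaussIntegral_anti h3 h4 le_rfl (thetaFour_sq_le_thetaThree_sq ht)
    · have h4 := pow_pos (thetaFour_pos ht) 2
      rw [← gaussIntegral_self h4]
      exact gaussIntegral_anti h4 h4 (thetaFour_sq_le_thetaThree_sq ht) le_rfl

theorem ellK_thetaModulus (ht : 0 < t) : EllK (thetaModulus t) = π / 2 * thetaThree t ^ 2 := by
  rw [ellK_eq_mul_gaussIntegral (pow_pos (thetaThree_pos ht) 2) (pow_pos (thetaFour_pos ht) 2),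
    gaussIntegral_thetaThree_sq_thetaFour_sq ht, mul_comm]
  rw [one_sub_thetaModulus_sq ht, ← div_pow, ← pow_mul]

lemma thetaModulus_rpow_half (ht : 0 < t) :
    thetaModulus t ^ ((1 : ℝ) / 2) = thetaTwo t / thetaThree t := by
  rw [← Real.sqrt_eq_rpow, thetaModulus,
    Real.sqrt_sq (div_pos (thetaTwo_pos ht) (thetaThree_pos ht)).le]

lemma one_sub_thetaModulus_sq_rpow (ht : 0 < t) :
    (1 - thetaModulus t ^ 2) ^ ((3 : ℝ) / 4) = (thetaFour t / thetaThree t) ^ 3 := by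
  rw [one_sub_thetaModulus_sq ht, ← Real.rpow_natCast, ← Real.rpow_natCast,
    ← Real.rpow_mul (div_pos (thetaFour_pos ht) (thetaThree_pos ht)).le]
  norm_num

theorem integral_eq_integral_thetaTwo_mul_thetaFour :
    ∫ k in (0 : ℝ)..1, 1 / (k ^ ((1 : ℝ) / 2) * (1 - k ^ 2) ^ ((3 : ℝ) / 4) * EllK k) =
      ∫ t in Ioi 0, thetaTwo t * thetaFour t := by
  rw [intervalIntegral.integral_of_le zero_le_one, integral_Ioc_eq_integral_Ioo,
    ← image_thetaModulus, integral_image_eq_integral_abs_deriv_smul measurableSet_Ioi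
      (fun t ht ↦ (hasDerivAt_thetaModulus ht).hasDerivWithinAt) strictAntiOn_thetaModulus.injOn]
  refine setIntegral_congr_fun measurableSet_Ioi fun t (ht : 0 < t) ↦ ?_
  have h2 := thetaTwo_pos ht
  have h3 := thetaThree_pos ht
  have h4 := thetaFour_pos ht
  simp only [smul_eq_mul]
  rw [thetaModulus_rpow_half ht, one_sub_thetaModulus_sq_rpow ht, ellK_thetaModulus ht, abs_neg,
    thetaModulus, abs_of_pos (by positivity)]
  field_simp

end ThetaModulus

section ThetaIntegral

open Filter Topology Set

variable {t : ℝ}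

lemma hasSum_log_of_hasProd {ι : Type*} {f : ι → ℝ} {a : ℝ} (hf : ∀ i, f i ≠ 0) (ha : a ≠ 0)
    (h : HasProd f a) : HasSum (fun i ↦ Real.log (f i)) (Real.log a) :=
  ((Real.continuousAt_log ha).tendsto.comp h).congr fun _ ↦ Real.log_prod fun i _ ↦ hf i

lemma nome_zpow_sq (t : ℝ) (n : ℤ) : nome t ^ n ^ 2 = Real.exp (-π * n ^ 2 * t) := by
  rw [nome, ← Real.rpow_intCast, ← Real.exp_mul]
  push_cast
  ring_nf

lemma hasProd_thetaThree_div_thetaFour (ht : 0 < t) :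
    HasProd (fun n : ℕ ↦ ((1 + nome t ^ (2 * n + 1)) / (1 - nome t ^ (2 * n + 1))) ^ 2)
      (thetaThree t / thetaFour t) := by
  have hq0 : nome t ≠ 0 := (nome_pos t).ne'
  have h₃ := hasProd_jacobi_triple_product hq0 (abs_nome_lt_one ht) one_ne_zero
  have h₄ := hasProd_jacobi_triple_product hq0 (abs_nome_lt_one ht) (neg_ne_zero.2 one_ne_zero)
  simp only [one_zpow, inv_one, inv_neg, one_mul, neg_one_mul, ← sub_eq_add_neg, nome_zpow_sq]
    at h₃ h₄
  refine (h₃.div₀ h₄ (thetaFour_pos ht).ne').congr_fun fun n ↦ ?_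
  have hne : 1 - (nome t ^ 2) ^ (n + 1) ≠ 0 := by
    rw [← pow_mul]
    exact (sub_pos.2 (pow_lt_one₀ (nome_pos t).le (nome_lt_one ht) (by lia))).ne'
  rw [mul_div_mul_left _ _ hne, div_pow, sq, sq]

lemma hasSum_log_thetaThree_div_thetaFour (ht : 0 < t) :
    HasSum (fun n : ℕ ↦
        2 * (Real.log (1 + nome t ^ (2 * n + 1)) - Real.log (1 - nome t ^ (2 * n + 1))))
      (Real.log (thetaThree t / thetaFour t)) := by
  have hnum (n : ℕ) : 1 + nome t ^ (2 * n + 1) ≠ 0 := by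
    have := nome_pos t
    positivity
  have hden (n : ℕ) : 1 - nome t ^ (2 * n + 1) ≠ 0 :=
    (sub_pos.2 (pow_lt_one₀ (nome_pos t).le (nome_lt_one ht) (by lia))).ne'
  refine (hasSum_log_of_hasProd (fun n ↦ pow_ne_zero 2 (div_ne_zero (hnum n) (hden n)))
    (div_pos (thetaThree_pos ht) (thetaFour_pos ht)).ne'
    (hasProd_thetaThree_div_thetaFour ht)).congr_fun fun n ↦ ?_
  rw [Real.log_pow, Real.log_div (hnum n) (hden n), Nat.cast_two]

lemma hasSum_nat_thetaTwo (ht : 0 < t) :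
    HasSum (fun n : ℕ ↦ 2 * Real.exp (-π * ((n : ℝ) + 1 / 2) ^ 2 * t)) (thetaTwo t) := by
  refine (hasSum_thetaTwo ht).nat_add_neg_add_one.congr_fun fun n ↦ ?_
  push_cast
  rw [two_mul]
  ring_nf

/-- The terms of the double series for `θ₂ t * θ₄ t` obtained from the inversion formula
`θ₄ t = θ₂ (1 / t) / √t`. -/
noncomputable def thetaTerm (p : ℕ × ℕ) (t : ℝ) : ℝ :=
  4 * (Real.exp (-π * ((p.2 : ℝ) + 1 / 2) ^ 2 * t) *
    (1 / √t * Real.exp (-π * ((p.1 : ℝ) + 1 / 2) ^ 2 * (1 / t))))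

lemma thetaTerm_nonneg (p : ℕ × ℕ) (t : ℝ) : 0 ≤ thetaTerm p t := by
  unfold thetaTerm
  positivity

lemma hasSum_thetaTerm (ht : 0 < t) :
    HasSum (fun p ↦ thetaTerm p t) (thetaTwo t * thetaFour t) := by
  have h₂ := hasSum_nat_thetaTwo ht
  have h₄ := (hasSum_nat_thetaTwo (one_div_pos.2 ht)).mul_left (1 / √t)
  rw [← thetaFour_eq_thetaTwo_inv ht] at h₄
  rw [mul_comm]
  refine (h₄.mul h₂ (h₄.summable.mul_of_nonneg h₂.summable (fun n ↦ by positivity)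
    fun n ↦ by positivity)).congr_fun fun p ↦ ?_
  rw [thetaTerm]
  ring

lemma integrableOn_thetaTerm (p : ℕ × ℕ) : IntegrableOn (thetaTerm p) (Ioi 0) :=
  (integrableOn_exp_mul_inv_sqrt_mul_exp_inv (by positivity) (by positivity)).const_mul 4

lemma integral_thetaTerm (p : ℕ × ℕ) : ∫ t in Ioi 0, thetaTerm p t =
    4 * (Real.exp (-(2 * π * (p.2 + 1 / 2) * (p.1 + 1 / 2))) / (p.2 + 1 / 2)) := by
  simp only [thetaTerm]
  rw [integral_const_mul, integral_exp_mul_inv_sqrt_mul_exp_inv (by positivity) (by positivity)]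

lemma summable_integral_thetaTerm : Summable fun p ↦ ∫ t in Ioi 0, thetaTerm p t := by
  have hexp := Real.summable_exp_neg_nat
  refine Summable.of_nonneg_of_le (fun p ↦ integral_nonneg (thetaTerm_nonneg p)) (fun p ↦ ?_)
    ((hexp.mul_of_nonneg hexp (fun n ↦ (Real.exp_pos _).le) fun n ↦ (Real.exp_pos _).le).mul_left 8)
  have h1 : (0 : ℝ) ≤ p.1 := p.1.cast_nonneg
  have h2 : (0 : ℝ) ≤ p.2 := p.2.cast_nonneg
  have hle : Real.exp (-(2 * π * (p.2 + 1 / 2) * (p.1 + 1 / 2))) ≤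
      Real.exp (-p.1) * Real.exp (-p.2) := by
    rw [← Real.exp_add]
    refine Real.exp_le_exp.2 ?_
    nlinarith [mul_nonneg h1 h2, mul_nonneg (sub_nonneg.2 Real.pi_gt_three.le) (mul_nonneg
      (by positivity : (0 : ℝ) ≤ p.2 + 1 / 2) (by positivity : (0 : ℝ) ≤ p.1 + 1 / 2))]
  calc ∫ t in Ioi 0, thetaTerm p t
      = 4 / (p.2 + 1 / 2) * Real.exp (-(2 * π * (p.2 + 1 / 2) * (p.1 + 1 / 2))) := by
        rw [integral_thetaTerm]
        ring
    _ ≤ 8 * (Real.exp (-p.1) * Real.exp (-p.2)) := by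
        gcongr
        rw [div_le_iff₀ (by positivity)]
        linarith

lemma hasSum_integral_thetaTerm : HasSum (fun p ↦ ∫ t in Ioi 0, thetaTerm p t)
    (∫ t in Ioi 0, thetaTwo t * thetaFour t) := by
  have h := hasSum_integral_of_summable_integral_norm integrableOn_thetaTerm (by
    simpa only [Real.norm_of_nonneg (thetaTerm_nonneg _ _)] using summable_integral_thetaTerm)
  rwa [setIntegral_congr_fun measurableSet_Ioi fun t ht ↦ (hasSum_thetaTerm ht).tsum_eq] at h

lemma hasSum_integral_thetaTerm_fiber (n : ℕ) :
    HasSum (fun m ↦ ∫ t in Ioi 0, thetaTerm (n, m) t)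
      (4 * (Real.log (1 + nome (1 / 2) ^ (2 * n + 1)) -
        Real.log (1 - nome (1 / 2) ^ (2 * n + 1)))) := by
  have hlt : |nome (1 / 2) ^ (2 * n + 1)| < 1 := by
    rw [abs_pow]
    exact pow_lt_one₀ (abs_nonneg _) (abs_nome_lt_one one_half_pos) (by lia)
  refine ((Real.hasSum_log_sub_log_of_abs_lt_one hlt).mul_left 4).congr_fun fun m ↦ ?_
  have harg : ((2 * n + 1) * (2 * m + 1) : ℕ) * (-π * (1 / 2)) =
      -(2 * π * (m + 1 / 2) * (n + 1 / 2)) := by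
    push_cast
    ring
  rw [integral_thetaTerm, ← pow_mul, nome, ← Real.exp_nat_mul, harg]
  field_simp

theorem integral_thetaTwo_mul_thetaFour :
    ∫ t in Ioi 0, thetaTwo t * thetaFour t =
      2 * Real.log (thetaThree (1 / 2) / thetaFour (1 / 2)) := by
  refine (hasSum_integral_thetaTerm.prod_fiberwise hasSum_integral_thetaTerm_fiber).unique
    (((hasSum_log_thetaThree_div_thetaFour one_half_pos).mul_left 2).congr_fun fun n ↦ ?_)
  ring

end ThetaIntegral

theorem stmt_6 :
    ∫ k in (0:ℝ)..(1:ℝ), 1 / (k ^ ((1:ℝ)/2) * (1 - k^2) ^ ((3:ℝ)/4) * EllK k)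
      = 2 * Real.log (1 + Real.sqrt 2) := by
  rw [integral_eq_integral_thetaTwo_mul_thetaFour, integral_thetaTwo_mul_thetaFour,
    thetaThree_half_eq, mul_div_cancel_right₀ _ (thetaFour_pos one_half_pos).ne']
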